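/- Let a > 0, λ > 0, T = a/λ and c ∈ ℝ, and define R(t) = (1/T)·∫_0^T Q_a(λ·(s + t) − c) · Q_a(λ·(s − T/2) − c) ds. Then R(t) ≤ R(T/2) for every t ∈ ℝ, and R(T/2) = (1/a)·∫_0^a Q_a(y)² dy; that is, the periodic part of the residence-time distribution is maximal at odd multiples of half the forcing period. -/

import Mathlib

/-!
Both factors of the integrand are translates of the continuous `a`-periodic function `Q a`.
By `u v ≤ (u² + v²) / 2` and the fact that every translate of `Q a ^ 2` has the same integral over
a period, `R` is at most the mean of `Q a ^ 2` over a period. At `t = T / 2` the two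
arguments differ by exactly one period `a`, so the two factors coincide and the bound is attained.

The analytic input is that `Q a` is continuous (`continuous_Q`), which makes all the integrals
genuine. It rests on the two-sided exponential decay of the peak shape (`A_le`).
-/

open Real MeasureTheory

/-- The universal peak shape `A(z) = (1/2) e^{-2z} exp(-(1/2) e^{-2z})`. -/
noncomputable def A (z : ℝ) : ℝ :=
  (1 / 2) * Real.exp (-2 * z) * Real.exp (-(1 / 2) * Real.exp (-2 * z))

/-- The universal periodic function `Q_a(y) = 2a ∑_{k ∈ ℤ} A(y - k a)`. -/
noncomputable def Q (a y : ℝ) : ℝ := 2 * a * ∑' k : ℤ, A (y - k * a)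

/-- The periodic modulation `R(t)` of the residence-time distribution. -/
noncomputable def R (a lam T c t : ℝ) : ℝ :=
  (1 / T) * ∫ s in (0:ℝ)..T, Q a (lam * (s + t) - c) * Q a (lam * (s - T / 2) - c)

lemma A_nonneg (z : ℝ) : 0 ≤ A z := by
  unfold A; positivity

/-- With `x = exp (-2 z) / 2` one has `A z = x exp (-x)`, bounded by `x` and by `2 / x`;
these two bounds give the decay at `+∞` and `-∞` respectively. -/
lemma A_le (z : ℝ) : A z ≤ 4 * Real.exp (-2 * |z|) := by
  unfold A
  have hE := Real.exp_pos (-2 * z)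
  rcases le_total 0 z with hz | hz
  · rw [abs_of_nonneg hz]
    have h1 : Real.exp (-(1 / 2) * Real.exp (-2 * z)) ≤ 1 := by
      apply Real.exp_le_one_iff.mpr; linarith
    nlinarith
  · rw [abs_of_nonpos hz]
    have hinv : Real.exp (-2 * -z) = (Real.exp (-2 * z))⁻¹ := by
      rw [← Real.exp_neg]; ring_nf
    rw [hinv]
    generalize Real.exp (-2 * z) = E at hE
    rw [neg_mul, Real.exp_neg]
    have hq := Real.quadratic_le_exp_of_nonneg (x := 1 / 2 * E) (by positivity)
    rw [← div_eq_mul_inv, ← div_eq_mul_inv, div_le_div_iff₀ (Real.exp_pos _) hE]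
    nlinarith

lemma summable_bound (a : ℝ) (ha : 0 < a) (C : ℝ) :
    Summable fun k : ℤ => C * Real.exp (-2 * a * |(k : ℝ)|) := by
  apply Summable.mul_left
  have h : Summable fun n : ℕ => Real.exp (-2 * a * (n : ℝ)) := by
    have := Real.summable_exp_nat_mul_iff.mpr (show -2 * a < 0 by linarith)
    simpa [mul_comm] using this
  apply Summable.of_nat_of_neg <;> simpa using h

lemma continuous_Q (a : ℝ) (ha : 0 < a) : Continuous (Q a) := by
  unfold Q
  apply Continuous.mul continuous_const
  rw [continuous_iff_continuousAt]
  intro y₀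
  have hon : ContinuousOn (fun y => ∑' k : ℤ, A (y - k * a)) (Metric.ball 0 (|y₀| + 1)) := by
    apply continuousOn_tsum (u := fun k : ℤ =>
      (4 * Real.exp (2 * (|y₀| + 1))) * Real.exp (-2 * a * |(k : ℝ)|))
    · intro k
      unfold A
      fun_prop
    · exact summable_bound a ha _
    · intro k y hy
      rw [Real.norm_of_nonneg (A_nonneg _)]
      refine (A_le _).trans ?_
      rw [mul_assoc, ← Real.exp_add]
      have hy' : |y| < |y₀| + 1 := by simpa using hy
      have h1 : |(k : ℝ) * a| = |(k : ℝ)| * a := by rw [abs_mul, abs_of_pos ha]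
      have h2 : |(k : ℝ) * a| - |y| ≤ |y - k * a| := by
        rw [abs_sub_comm]; exact abs_sub_abs_le_abs_sub _ _
      gcongr
      nlinarith
  exact hon.continuousAt (Metric.isOpen_ball.mem_nhds (by simp))

lemma periodic_Q (a : ℝ) : Function.Periodic (Q a) a := by
  intro y
  unfold Q
  congr 1
  rw [← (Equiv.addRight (1 : ℤ)).tsum_eq (fun k : ℤ => A (y + a - k * a))]
  congr 1
  ext k
  congr 1
  simp
  ring

/-- The integral of `Q a ^ 2` over a period, in the time variable, is independent of the phase. -/
lemma integral_Q_sq (a lam b : ℝ) (hlam : 0 < lam) :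
    ∫ s in (0:ℝ)..(a / lam), (Q a (lam * s + b)) ^ 2
      = lam⁻¹ * ∫ y in (0:ℝ)..a, (Q a y) ^ 2 := by
  rw [intervalIntegral.integral_comp_mul_add (fun y => (Q a y) ^ 2) hlam.ne' b]
  have hp : Function.Periodic (fun y => (Q a y) ^ 2) a := fun y => by
    simp only [periodic_Q a y]
  have h := hp.intervalIntegral_add_eq b 0
  rw [zero_add] at h
  rw [← h, smul_eq_mul, mul_div_cancel₀ _ hlam.ne', mul_zero, zero_add, add_comm a b]

theorem stmt_10 (a lam T c : ℝ) (ha : 0 < a) (hlam : 0 < lam) (hT : T = a / lam) :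
    (∀ t : ℝ, R a lam T c t ≤ R a lam T c (T / 2)) ∧
    R a lam T c (T / 2) = (1 / a) * ∫ y in (0:ℝ)..a, (Q a y) ^ 2 := by
  have hQ := continuous_Q a ha
  have hTpos : 0 < T := by rw [hT]; positivity
  have hlT : lam * T = a := by rw [hT]; field_simp
  have hint : ∀ b : ℝ, ∫ s in (0:ℝ)..T, (Q a (lam * s + b)) ^ 2
      = lam⁻¹ * ∫ y in (0:ℝ)..a, (Q a y) ^ 2 := fun b => by
    rw [hT]; exact integral_Q_sq a lam b hlam
  have hhalf : R a lam T c (T / 2)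
      = (1 / T) * (lam⁻¹ * ∫ y in (0:ℝ)..a, (Q a y) ^ 2) := by
    rw [← hint (-(a / 2) - c)]
    unfold R
    congr 2
    ext s
    have e1 : lam * (s + T / 2) - c = (lam * s + (-(a / 2) - c)) + a := by
      linear_combination hlT / 2
    have e2 : lam * (s - T / 2) - c = lam * s + (-(a / 2) - c) := by
      linear_combination -hlT / 2
    rw [e1, e2, periodic_Q a, sq]
  refine ⟨fun t => ?_, ?_⟩
  · rw [hhalf]
    unfold R
    apply mul_le_mul_of_nonneg_left _ (by positivity)
    have hmono : ∫ s in (0:ℝ)..T, Q a (lam * (s + t) - c) * Q a (lam * (s - T / 2) - c)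
        ≤ ∫ s in (0:ℝ)..T, ((1 / 2) * (Q a (lam * s + (lam * t - c))) ^ 2
          + (1 / 2) * (Q a (lam * s + (-(lam * (T / 2)) - c))) ^ 2) := by
      apply intervalIntegral.integral_mono_on hTpos.le
      · exact Continuous.intervalIntegrable (by fun_prop) _ _
      · exact Continuous.intervalIntegrable (by fun_prop) _ _
      · intro s _
        have e1 : lam * (s + t) - c = lam * s + (lam * t - c) := by ring
        have e2 : lam * (s - T / 2) - c = lam * s + (-(lam * (T / 2)) - c) := by ring
        rw [e1, e2]
        nlinarith [sq_nonneg (Q a (lam * s + (lam * t - c))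
          - Q a (lam * s + (-(lam * (T / 2)) - c)))]
    rw [intervalIntegral.integral_add (Continuous.intervalIntegrable (by fun_prop) _ _)
      (Continuous.intervalIntegrable (by fun_prop) _ _),
      intervalIntegral.integral_const_mul, intervalIntegral.integral_const_mul,
      hint, hint] at hmono
    linarith
  · rw [hhalf, ← mul_assoc, ← hlT]
    congr 1
    field_simp
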